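/- Let n ≥ 1, σ² > 0, and h₁, h₂ ∈ ℝⁿ with h₁ ≠ 0 and h₂ ≠ 0. Define Q(λ₂) = h₁ᵀ(σ²I + (λ₂ − σ²/‖h₂‖²)⁺·h₂h₂ᵀ)⁻¹h₁ and P₁(λ₁, λ₂) = (λ₁ − 1/Q(λ₂))⁺. Then P₁ is nondecreasing in λ₁ and nonincreasing in λ₂. -/

import Mathlib

/-!
Inversion reverses the Loewner order on positive definite matrices: for positive definite `A` and
`B`, both Schur complements `B - A` and `A⁻¹ - B⁻¹` of the block matrix `[B, I; I, A⁻¹]` test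
whether it is positive semidefinite. Raising `λ₂` increases the noise covariance
`σ²I + (λ₂ − σ²/‖h₂‖²)⁺ h₂h₂ᵀ`, hence lowers the gain `Q`, which stays positive, hence raises the
effective noise level `1 / Q` that is subtracted from `λ₁`.
-/

open Matrix

section WaterFilling

open scoped ComplexOrder MatrixOrder

variable {ι 𝕜 : Type*} [RCLike 𝕜]

section RankOneUpdate

variable [Finite ι]

lemma monotone_add_smul_vecMulVec_self_star {α : Type*} [Preorder α] {p : α → ℝ}
    (hp : Monotone p) (S : Matrix ι ι 𝕜) (h : ι → 𝕜) :
    Monotone fun a => S + p a • vecMulVec h (star h) := by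
  intro a b hab
  rw [Matrix.le_iff, add_sub_add_left_eq_sub, ← sub_smul]
  exact (posSemidef_vecMulVec_self_star h).smul (sub_nonneg.2 (hp hab))

lemma posDef_add_smul_vecMulVec_self_star {S : Matrix ι ι 𝕜} (hS : S.PosDef) (h : ι → 𝕜)
    {p : ℝ} (hp : 0 ≤ p) : (S + p • vecMulVec h (star h)).PosDef :=
  hS.add_posSemidef ((posSemidef_vecMulVec_self_star h).smul hp)

end RankOneUpdate

variable [Fintype ι]

lemma re_dotProduct_mulVec_mono {A B : Matrix ι ι 𝕜} (hAB : A ≤ B) (x : ι → 𝕜) :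
    RCLike.re (star x ⬝ᵥ A *ᵥ x) ≤ RCLike.re (star x ⬝ᵥ B *ᵥ x) := by
  rw [← sub_nonneg, ← map_sub, ← dotProduct_sub, ← sub_mulVec]
  exact (Matrix.le_iff.1 hAB).re_dotProduct_nonneg x

variable [DecidableEq ι]

lemma antitoneOn_inv_posDef : AntitoneOn (·⁻¹) {A : Matrix ι ι 𝕜 | A.PosDef} := by
  intro A (hA : A.PosDef) B (hB : B.PosDef) hAB
  let := hB.isUnit.invertible
  let := hA.inv.isUnit.invertible
  have hblock : (fromBlocks B 1 1ᴴ A⁻¹).PosSemidef := by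
    rw [PosDef.fromBlocks₂₂ B 1 hA.inv]
    simpa [Matrix.le_iff, nonsing_inv_nonsing_inv A hA.det_pos.ne'.isUnit] using hAB
  rw [PosDef.fromBlocks₁₁ 1 A⁻¹ hB] at hblock
  simpa [Matrix.le_iff] using hblock

/-- The gain `hᴴ K⁻¹ h` of the vector channel `h` with noise covariance `K`: the signal-to-noise
ratio per unit of transmit power after whitening the noise. -/
noncomputable def channelGain (K : Matrix ι ι 𝕜) (h : ι → 𝕜) : ℝ :=
  RCLike.re (star h ⬝ᵥ K⁻¹ *ᵥ h)

/-- The power that water-filling to the level `lam` allocates to the vector channel `h` with noise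
covariance `K`, whose effective noise level is the reciprocal of its gain. -/
noncomputable def waterFillingPower (lam : ℝ) (K : Matrix ι ι 𝕜) (h : ι → 𝕜) : ℝ :=
  max (lam - 1 / channelGain K h) 0

lemma channelGain_pos {K : Matrix ι ι 𝕜} (hK : K.PosDef) {h : ι → 𝕜} (hh : h ≠ 0) :
    0 < channelGain K h :=
  hK.inv.re_dotProduct_pos hh

lemma antitoneOn_channelGain (h : ι → 𝕜) :
    AntitoneOn (fun K : Matrix ι ι 𝕜 => channelGain K h) {K | K.PosDef} :=
  fun _ hA _ hB hAB => re_dotProduct_mulVec_mono (antitoneOn_inv_posDef hA hB hAB) h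

lemma monotone_waterFillingPower (K : Matrix ι ι 𝕜) (h : ι → 𝕜) :
    Monotone fun lam => waterFillingPower lam K h :=
  fun _ _ hlam => max_le_max_right 0 (sub_le_sub_right hlam _)

lemma antitoneOn_waterFillingPower (lam : ℝ) {h : ι → 𝕜} (hh : h ≠ 0) :
    AntitoneOn (fun K : Matrix ι ι 𝕜 => waterFillingPower lam K h) {K | K.PosDef} := by
  intro A hA B hB hAB
  have hgain : channelGain B h ≤ channelGain A h := antitoneOn_channelGain h hA hB hAB
  have hnoise : 1 / channelGain A h ≤ 1 / channelGain B h :=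
    one_div_le_one_div_of_le (channelGain_pos hB hh) hgain
  exact max_le_max_right 0 (sub_le_sub_left hnoise lam)

theorem stmt_14_general {α : Type*} [Preorder α] {K : α → Matrix ι ι 𝕜} (hK : Monotone K)
    (hpos : ∀ a, (K a).PosDef) {h : ι → 𝕜} (hh : h ≠ 0) :
    (∀ a, Monotone fun lam => waterFillingPower lam (K a) h) ∧
    (∀ lam, Antitone fun a => waterFillingPower lam (K a) h) :=
  ⟨fun a => monotone_waterFillingPower (K a) h,
    fun lam a b hab => antitoneOn_waterFillingPower lam hh (hpos a) (hpos b) (hK hab)⟩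

end WaterFilling

/-- User 1's vector-channel water-filling power
`P₁(λ₁,λ₂) = (λ₁ − 1/(h₁ᵀ(σ²I + (λ₂ − σ²/‖h₂‖²)⁺ h₂h₂ᵀ)⁻¹h₁))⁺`
is nondecreasing in its own water level `λ₁` and nonincreasing in the other
user's water level `λ₂`. -/
theorem stmt_14 (n : ℕ) (hn : 1 ≤ n) (σ2 : ℝ) (hσ : 0 < σ2)
    (h₁ h₂ : Fin n → ℝ) (hh₁ : h₁ ≠ 0) (hh₂ : h₂ ≠ 0)
    (Q : ℝ → ℝ)
    (hQ : Q = fun lam₂ => h₁ ⬝ᵥ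
      (σ2 • (1 : Matrix (Fin n) (Fin n) ℝ) +
        max (lam₂ - σ2 / (h₂ ⬝ᵥ h₂)) 0 • vecMulVec h₂ h₂)⁻¹ *ᵥ h₁)
    (P₁ : ℝ → ℝ → ℝ)
    (hP₁ : P₁ = fun lam₁ lam₂ => max (lam₁ - 1 / Q lam₂) 0) :
    (∀ lam₂, Monotone fun lam₁ => P₁ lam₁ lam₂) ∧
    (∀ lam₁, Antitone fun lam₂ => P₁ lam₁ lam₂) := by
  subst hQ hP₁
  have hpower : Monotone fun lam₂ => max (lam₂ - σ2 / (h₂ ⬝ᵥ h₂)) 0 :=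
    fun _ _ hlam => max_le_max_right 0 (sub_le_sub_right hlam _)
  exact stmt_14_general (monotone_add_smul_vecMulVec_self_star hpower (σ2 • 1) h₂)
    (fun _ => posDef_add_smul_vecMulVec_self_star (PosDef.one.smul hσ) h₂ (le_max_right _ _)) hh₁
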